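/- Let f be a real binary form of degree d ≥ 1 that factors as a product of d pairwise non-proportional real linear forms (i.e., f has d distinct real roots). Then the real rank of f is exactly d. -/

import Mathlib

open MvPolynomial

noncomputable section

/-- The real linear binary form `a·x + b·y`. -/
def lin (a b : ℝ) : MvPolynomial (Fin 2) ℝ := C a * X 0 + C b * X 1

/-- `f` is a sum of `r` terms `cⱼ · ℓⱼ^d` with `ℓⱼ` nonzero real linear forms. -/
def HasDecomp (f : MvPolynomial (Fin 2) ℝ) (d r : ℕ) : Prop :=
  ∃ c a b : Fin r → ℝ, (∀ j, (a j, b j) ≠ (0, 0)) ∧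
    f = ∑ j, C (c j) * lin (a j) (b j) ^ d

/-- The real (symmetric) rank of a binary form of degree `d`:
the least number of `d`-th powers of real linear forms needed to write `f`. -/
def realRank (f : MvPolynomial (Fin 2) ℝ) (d : ℕ) : ℕ :=
  sInf {r | HasDecomp f d r}

/-- The set of real projective roots of a binary form. -/
def projRoots (f : MvPolynomial (Fin 2) ℝ) : Set (Projectivization ℝ (Fin 2 → ℝ)) :=
  {p | eval p.rep f = 0}

/-- `f` is a product of `d` pairwise non-proportional real linear forms,
i.e. `f` has `d` distinct real roots. -/
def SplitsDistinct (f : MvPolynomial (Fin 2) ℝ) (d : ℕ) : Prop :=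
  ∃ a b : Fin d → ℝ, (∀ j, (a j, b j) ≠ (0, 0)) ∧
    (∀ i j, i ≠ j → a i * b j ≠ a j * b i) ∧
    f = ∏ j, lin (a j) (b j)

/-- `f` has distinct roots, i.e. it is squarefree as a complex polynomial. -/
def SquarefreeC (f : MvPolynomial (Fin 2) ℝ) : Prop :=
  Squarefree (MvPolynomial.map (algebraMap ℝ ℂ) f)

/-- The linear change of variables of `f` by the matrix `A`: `f(A(x,y))`. -/
def subst (A : Matrix (Fin 2) (Fin 2) ℝ) (f : MvPolynomial (Fin 2) ℝ) :
    MvPolynomial (Fin 2) ℝ :=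
  aeval (fun i => C (A i 0) * X 0 + C (A i 1) * X 1) f

/-- The complex rank of a real binary form of degree `d`. -/
def complexRank (f : MvPolynomial (Fin 2) ℝ) (d : ℕ) : ℕ :=
  sInf {r | ∃ a b : Fin r → ℂ, (∀ j, (a j, b j) ≠ (0, 0)) ∧
    MvPolynomial.map (algebraMap ℝ ℂ) f = ∑ j, (C (a j) * X 0 + C (b j) * X 1) ^ d}

/-
Lower bound: a nonzero combination of `r` powers of linear forms has at most `r` real roots.
Differentiating along the kernel of one of the linear forms removes that term, and by Rolle's
theorem on the projective line a directional derivative loses at most one real root.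

Upper bound: the functional `L` on polynomials with `L ((X + u) ^ d) = f(u, 1)` changes sign on the
powers `(X + u) ^ d`, because `f` has a simple root. Perturbing these powers into products with
distinct roots, the intermediate value theorem gives distinct `x₁, …, x_d` with
`L (∏ (X - xᵢ)) = 0`. By Lagrange interpolation `L` is then a combination of the evaluations at the
`xᵢ`, and applying it to `(X + u) ^ d` writes `f` as a sum of `d` powers.
-/

section DirectionalDerivative

variable {σ R : Type*} [CommSemiring R]

/-- The directional derivative `∑ vᵢ ∂/∂Xᵢ`, which annihilates the powers of a linear form
vanishing at `v`. -/
def dirDeriv [Fintype σ] (v : σ → R) : Derivation R (MvPolynomial σ R) (MvPolynomial σ R) :=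
  ∑ i, v i • pderiv i

/-- The restriction of a polynomial to the affine line `t ↦ w + t • v`, on which `dirDeriv v`
becomes the ordinary derivative. -/
def restrictLine (w v : σ → R) : MvPolynomial σ R →ₐ[R] Polynomial R :=
  aeval fun i => Polynomial.C (w i) + Polynomial.C (v i) * Polynomial.X

lemma eval_restrictLine (w v : σ → R) (f : MvPolynomial σ R) (t : R) :
    (restrictLine w v f).eval t = eval (w + t • v) f := by
  induction f using MvPolynomial.induction_on with
  | C a => simp [restrictLine]
  | add p q hp hq => simp only [map_add, Polynomial.eval_add, hp, hq]
  | mul_X p i hp => simp [restrictLine, ← hp, mul_comm t]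

lemma eval_smul_of_isHomogeneous {f : MvPolynomial σ R} {d : ℕ} (hf : f.IsHomogeneous d)
    (a : R) (x : σ → R) : eval (a • x) f = a ^ d * eval x f := by
  simp only [eval_eq, Finset.mul_sum]
  refine Finset.sum_congr rfl fun m hm => ?_
  have hdeg : ∑ i ∈ m.support, m i = d := by
    simpa [Finsupp.weight_apply, Finsupp.sum] using hf (mem_support_iff.1 hm)
  simp only [Pi.smul_apply, smul_eq_mul, mul_pow, Finset.prod_mul_distrib,
    Finset.prod_pow_eq_pow_sum, hdeg]
  ring

variable [Fintype σ]

lemma dirDeriv_apply (v : σ → R) (f : MvPolynomial σ R) :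
    dirDeriv v f = ∑ i, v i • pderiv i f := by
  rw [dirDeriv, ← Derivation.coeFnAddMonoidHom_apply, map_sum, Finset.sum_apply]
  rfl

lemma dirDeriv_X (v : σ → R) (i : σ) : dirDeriv v (X i) = C (v i) := by
  classical
  simp [dirDeriv_apply, pderiv_X, Pi.single_apply, MvPolynomial.smul_eq_C_mul]

lemma derivative_restrictLine (w v : σ → R) (f : MvPolynomial σ R) :
    (restrictLine w v f).derivative = restrictLine w v (dirDeriv v f) := by
  induction f using MvPolynomial.induction_on with
  | C a => simp [restrictLine]
  | add p q hp hq => simp only [map_add, hp, hq]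
  | mul_X p i hp =>
    have hX : (restrictLine w v (X i)).derivative = restrictLine w v (C (v i)) := by
      simp [restrictLine]
    simp only [map_mul, Polynomial.derivative_mul, hp, hX, Derivation.leibniz, dirDeriv_X,
      smul_eq_mul, map_add]
    ring

lemma isHomogeneous_dirDeriv {f : MvPolynomial σ R} {d : ℕ} (hf : f.IsHomogeneous d)
    (v : σ → R) : (dirDeriv v f).IsHomogeneous (d - 1) := by
  rw [dirDeriv_apply]
  exact IsHomogeneous.sum _ _ _ fun i _ =>
    (homogeneousSubmodule σ R (d - 1)).smul_mem (v i) hf.pderiv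

lemma eval_dirDeriv_self {f : MvPolynomial σ R} {d : ℕ} (hf : f.IsHomogeneous d) (v : σ → R) :
    eval v (dirDeriv v f) = d * eval v f := by
  have euler := congrArg (eval v) hf.sum_X_mul_pderiv
  simpa [dirDeriv_apply, smul_eval] using euler

end DirectionalDerivative

section ProjectiveLine

variable {K V : Type*} [Field K] [AddCommGroup V] [Module K V] {v w : V}

lemma add_smul_ne_zero_of_linearIndependent (h : LinearIndependent K ![v, w]) (t : K) :
    w + t • v ≠ 0 := by
  intro h0
  have := (LinearIndependent.pair_iff.1 h t 1 (by rw [one_smul, add_comm, h0])).2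
  exact one_ne_zero this

lemma span_pair_eq_top_of_linearIndependent (h : LinearIndependent K ![v, w])
    (hdim : Module.finrank K V = 2) : Submodule.span K {v, w} = ⊤ := by
  simpa [Matrix.range_cons, Set.pair_comm] using
    h.span_eq_top_of_card_eq_finrank (by simp [hdim])

/-- The affine chart `t ↦ [w + t v]` of the projective line through `[v]` and `[w]`, whose point at
infinity is `[v]`. -/
def affineChart (h : LinearIndependent K ![v, w]) (t : K) : Projectivization K V :=
  .mk K (w + t • v) (add_smul_ne_zero_of_linearIndependent h t)

lemma affineChart_injective (h : LinearIndependent K ![v, w]) :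
    Function.Injective (affineChart h) := by
  intro s t hst
  obtain ⟨a, ha⟩ := (Projectivization.mk_eq_mk_iff' ..).1 hst
  obtain ⟨hts, ha1⟩ := LinearIndependent.pair_iff.1 h (a * t - s) (a - 1) <| by
    linear_combination (norm := module) ha
  linear_combination t * ha1 - hts

lemma range_affineChart (h : LinearIndependent K ![v, w]) (hspan : Submodule.span K {v, w} = ⊤)
    (hv : v ≠ 0) : Set.range (affineChart h) = {Projectivization.mk K v hv}ᶜ := by
  ext p
  induction p using Projectivization.ind with | h u hu
  rw [Set.mem_compl_singleton_iff, ne_eq, Projectivization.mk_eq_mk_iff']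
  constructor
  · rintro ⟨t, ht⟩ ⟨c, rfl⟩
    obtain ⟨a, ha⟩ := (Projectivization.mk_eq_mk_iff' ..).1 ht
    have := LinearIndependent.pair_iff.1 h (t - a * c) 1 <| by
      linear_combination (norm := module) -ha
    exact one_ne_zero this.2
  · intro hne
    obtain ⟨a, b, rfl⟩ := Submodule.mem_span_pair.1 (hspan ▸ Submodule.mem_top : u ∈ _)
    have hb : b ≠ 0 := by
      rintro rfl
      exact hne ⟨a, by simp⟩
    refine ⟨a / b, (Projectivization.mk_eq_mk_iff' ..).2 ⟨b⁻¹, ?_⟩⟩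
    match_scalars <;> field_simp

end ProjectiveLine

section Restriction

variable {σ K : Type*} [Field K]

lemma eq_zero_of_restrictLine_eq_zero [Infinite K] {f : MvPolynomial σ K} {d : ℕ} {v w : σ → K}
    (hf : f.IsHomogeneous d) (hspan : Submodule.span K {v, w} = ⊤)
    (h : restrictLine w v f = 0) : f = 0 := by
  have affine (a b : K) (hb : b ≠ 0) : eval (a • v + b • w) f = 0 := by
    have hscale : a • v + b • w = b • (w + (a / b) • v) := by match_scalars <;> field_simp
    rw [hscale, eval_smul_of_isHomogeneous hf, ← eval_restrictLine, h, Polynomial.eval_zero,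
      mul_zero]
  have transverse (a : K) : restrictLine (a • v) w f = 0 :=
    Polynomial.eq_zero_of_infinite_isRoot _ <| (Set.finite_singleton 0).infinite_compl.mono
      fun b hb => (eval_restrictLine ..).trans (affine a b hb)
  refine MvPolynomial.funext fun u => ?_
  obtain ⟨a, b, rfl⟩ := Submodule.mem_span_pair.1 (hspan ▸ Submodule.mem_top : u ∈ _)
  rw [← eval_restrictLine, transverse, Polynomial.eval_zero, map_zero]

end Restriction

section ProjectiveRolle

variable {f : MvPolynomial (Fin 2) ℝ} {d : ℕ} {v w : Fin 2 → ℝ}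

lemma mk_mem_projRoots_iff (hf : f.IsHomogeneous d) (hv : v ≠ 0) :
    Projectivization.mk ℝ v hv ∈ projRoots f ↔ eval v f = 0 := by
  obtain ⟨a, ha⟩ := Projectivization.exists_smul_eq_mk_rep ℝ v hv
  change eval (Projectivization.mk ℝ v hv).rep f = 0 ↔ _
  rw [← ha, Units.smul_def, eval_smul_of_isHomogeneous hf]
  simp

lemma encard_setOf_isRoot_le_derivative (P : Polynomial ℝ) :
    {t | P.IsRoot t}.encard ≤ {t | P.derivative.IsRoot t}.encard + 1 := by
  by_cases hP' : P.derivative = 0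
  · simp [hP']
  have hP : P ≠ 0 := by rintro rfl; simp at hP'
  have coe_roots {Q : Polynomial ℝ} (hQ : Q ≠ 0) : {t | Q.IsRoot t} = Q.roots.toFinset := by
    ext t; simp [hQ]
  rw [coe_roots hP, coe_roots hP', Set.encard_coe_eq_coe_finsetCard,
    Set.encard_coe_eq_coe_finsetCard]
  exact_mod_cast Polynomial.card_roots_toFinset_le_derivative P

lemma encard_projRoots_eq_encard_isRoot_add (hf : f.IsHomogeneous d)
    (h : LinearIndependent ℝ ![v, w]) (hv : v ≠ 0) :
    (projRoots f).encard = {t | (restrictLine w v f).IsRoot t}.encard +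
      (projRoots f ∩ {Projectivization.mk ℝ v hv}).encard := by
  have preimage : affineChart h ⁻¹' projRoots f = {t | (restrictLine w v f).IsRoot t} := by
    ext t
    rw [Set.mem_preimage, affineChart, mk_mem_projRoots_iff hf, Set.mem_ofPred_eq,
      Polynomial.IsRoot.def, eval_restrictLine]
  rw [← preimage, ← (affineChart_injective h).encard_image, Set.image_preimage_eq_inter_range,
    range_affineChart h (span_pair_eq_top_of_linearIndependent h (by simp)) hv, ← Set.sdiff_eq,
    Set.encard_sdiff_add_encard_inter]

theorem encard_projRoots_le_dirDeriv (hf : f.IsHomogeneous d) (hv : v ≠ 0) :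
    (projRoots f).encard ≤ (projRoots (dirDeriv v f)).encard + 1 := by
  obtain ⟨w, h⟩ := exists_linearIndependent_pair_of_one_lt_finrank
    (show 1 < Module.finrank ℝ (Fin 2 → ℝ) by simp) hv
  have infinity : projRoots f ∩ {.mk ℝ v hv} ⊆ projRoots (dirDeriv v f) ∩ {.mk ℝ v hv} := by
    rintro _ ⟨hroot, rfl⟩
    refine ⟨(mk_mem_projRoots_iff (isHomogeneous_dirDeriv hf v) hv).2 ?_, rfl⟩
    rw [eval_dirDeriv_self hf, (mk_mem_projRoots_iff hf hv).1 hroot, mul_zero]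
  rw [encard_projRoots_eq_encard_isRoot_add hf h hv,
    encard_projRoots_eq_encard_isRoot_add (isHomogeneous_dirDeriv hf v) h hv,
    ← derivative_restrictLine, add_right_comm]
  exact add_le_add (encard_setOf_isRoot_le_derivative _) (Set.encard_le_encard infinity)

lemma encard_projRoots_le_one_of_dirDeriv_eq_zero (hf : f.IsHomogeneous d) (hf0 : f ≠ 0)
    (hv : v ≠ 0) (hD : dirDeriv v f = 0) : (projRoots f).encard ≤ 1 := by
  obtain ⟨w, h⟩ := exists_linearIndependent_pair_of_one_lt_finrank
    (show 1 < Module.finrank ℝ (Fin 2 → ℝ) by simp) hv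
  have hconst : (restrictLine w v f).natDegree = 0 := by
    rw [← Polynomial.derivative_eq_zero, derivative_restrictLine, hD, map_zero]
  have no_affine_root : {t | (restrictLine w v f).IsRoot t} = ∅ := by
    refine Set.eq_empty_of_forall_notMem fun t ht => hf0 ?_
    refine eq_zero_of_restrictLine_eq_zero hf (span_pair_eq_top_of_linearIndependent h (by simp)) ?_
    rw [Set.mem_ofPred_eq, Polynomial.eq_C_of_natDegree_eq_zero hconst] at ht
    rw [Polynomial.eq_C_of_natDegree_eq_zero hconst]
    simpa using ht
  rw [encard_projRoots_eq_encard_isRoot_add hf h hv, no_affine_root, Set.encard_empty,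
    zero_add, Set.inter_comm]
  exact Set.encard_singleton_inter _ _

end ProjectiveRolle

section LowerBound

variable {f : MvPolynomial (Fin 2) ℝ} {d r : ℕ}

lemma eval_lin (a b : ℝ) (v : Fin 2 → ℝ) : eval v (lin a b) = a * v 0 + b * v 1 := by
  simp [lin]

lemma isHomogeneous_lin (a b : ℝ) : (lin a b).IsHomogeneous 1 :=
  (isHomogeneous_C_mul_X a 0).add (isHomogeneous_C_mul_X b 1)

lemma isHomogeneous_C_mul_lin_pow (c a b : ℝ) (d : ℕ) :
    (C c * lin a b ^ d).IsHomogeneous d := by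
  simpa using (isHomogeneous_C (Fin 2) c).mul ((isHomogeneous_lin a b).pow d)

lemma lin_ne_zero {a b : ℝ} (h : (a, b) ≠ (0, 0)) : lin a b ≠ 0 := by
  intro h0
  have ha : a = 0 := by simpa [h0] using (eval_lin a b ![1, 0]).symm
  have hb : b = 0 := by simpa [h0] using (eval_lin a b ![0, 1]).symm
  exact h (by rw [ha, hb])

lemma dirDeriv_C_mul_lin_pow (v : Fin 2 → ℝ) (c a b : ℝ) (d : ℕ) :
    dirDeriv v (C c * lin a b ^ d) =
      C (c * (d * (a * v 0 + b * v 1))) * lin a b ^ (d - 1) := by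
  have hlin : dirDeriv v (lin a b) = C (a * v 0 + b * v 1) := by
    simp [lin, dirDeriv_X]
  simp only [Derivation.leibniz, Derivation.leibniz_pow, hlin, ← algebraMap_eq,
    Derivation.map_algebraMap, smul_eq_mul, nsmul_eq_mul, map_mul, map_natCast]
  ring

lemma HasDecomp.isHomogeneous (h : HasDecomp f d r) : f.IsHomogeneous d := by
  obtain ⟨c, a, b, -, rfl⟩ := h
  exact IsHomogeneous.sum _ _ _ fun j _ => isHomogeneous_C_mul_lin_pow ..

lemma HasDecomp.exists_dirDeriv (h : HasDecomp f d (r + 1)) :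
    ∃ v : Fin 2 → ℝ, v ≠ 0 ∧ HasDecomp (dirDeriv v f) (d - 1) r := by
  obtain ⟨c, a, b, hab, rfl⟩ := h
  refine ⟨![b 0, -a 0], ?_, fun j => c j.succ * (d * (a j.succ * b 0 + b j.succ * -a 0)),
    fun j => a j.succ, fun j => b j.succ, fun j => hab j.succ, ?_⟩
  · intro h0
    have hb : b 0 = 0 := by simpa using congrFun h0 0
    have ha : a 0 = 0 := by simpa using congrFun h0 1
    exact hab 0 (by rw [ha, hb])
  · have hker : c 0 * (d * (a 0 * b 0 + b 0 * -a 0)) = 0 := by ring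
    rw [map_sum]
    simp only [dirDeriv_C_mul_lin_pow, Fin.sum_univ_succ, Matrix.cons_val_zero,
      Matrix.cons_val_one, hker, map_zero, zero_mul, zero_add]

theorem HasDecomp.encard_projRoots_le (h : HasDecomp f d r) (hf : f ≠ 0) :
    (projRoots f).encard ≤ r := by
  induction r generalizing f d with
  | zero =>
    obtain ⟨c, a, b, -, rfl⟩ := h
    exact absurd (by simp) hf
  | succ r ih =>
    obtain ⟨v, hv, hD⟩ := h.exists_dirDeriv
    push_cast
    by_cases hD0 : dirDeriv v f = 0
    · exact (encard_projRoots_le_one_of_dirDeriv_eq_zero h.isHomogeneous hf hv hD0).trans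
        le_add_self
    · calc (projRoots f).encard ≤ (projRoots (dirDeriv v f)).encard + 1 :=
            encard_projRoots_le_dirDeriv h.isHomogeneous hv
        _ ≤ r + 1 := by gcongr; exact ih hD hD0

lemma SplitsDistinct.isHomogeneous (h : SplitsDistinct f d) : f.IsHomogeneous d := by
  obtain ⟨a, b, -, -, rfl⟩ := h
  simpa using IsHomogeneous.prod Finset.univ (fun j => lin (a j) (b j)) (fun _ => 1)
    fun j _ => isHomogeneous_lin (a j) (b j)

lemma SplitsDistinct.ne_zero (h : SplitsDistinct f d) : f ≠ 0 := by
  obtain ⟨a, b, hab, -, rfl⟩ := h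
  exact Finset.prod_ne_zero_iff.2 fun j _ => lin_ne_zero (hab j)

lemma SplitsDistinct.le_encard_projRoots (h : SplitsDistinct f d) : d ≤ (projRoots f).encard := by
  have hf := h.isHomogeneous
  obtain ⟨a, b, hab, hdet, rfl⟩ := h
  have hne (j) : ![b j, -a j] ≠ 0 := fun h0 =>
    hab j (by simpa [and_comm] using h0)
  let root (j : Fin d) : Projectivization ℝ (Fin 2 → ℝ) := .mk ℝ ![b j, -a j] (hne j)
  have root_injective : Function.Injective root := by
    intro i j hij
    by_contra hne
    obtain ⟨c, hc⟩ := (Projectivization.mk_eq_mk_iff' ..).1 hij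
    have hb : c * b j = b i := by simpa using congrFun hc 0
    have ha : c * a j = a i := by simpa using congrFun hc 1
    exact hdet i j hne (by rw [← ha, ← hb]; ring)
  have root_mem (j) : root j ∈ projRoots (∏ j, lin (a j) (b j)) := by
    refine (mk_mem_projRoots_iff hf (hne j)).2 ?_
    rw [eval_prod]
    exact Finset.prod_eq_zero (Finset.mem_univ j) (by simp [eval_lin, mul_comm])
  calc (d : ℕ∞) = (Set.range root).encard := by
        rw [← Set.image_univ, root_injective.encard_image]; simp
    _ ≤ _ := Set.encard_le_encard (Set.range_subset_iff.2 root_mem)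

theorem SplitsDistinct.le_of_hasDecomp (hf : SplitsDistinct f d) {e : ℕ} (h : HasDecomp f e r) :
    d ≤ r := by
  exact_mod_cast hf.le_encard_projRoots.trans (h.encard_projRoots_le hf.ne_zero)

end LowerBound

section Quadrature

open Lagrange

variable {K ι : Type*} [Field K] {s : Finset ι} {x : ι → K}

theorem apply_eq_sum_basis_of_apply_nodal_eq_zero [DecidableEq ι]
    {M : Type*} [AddCommGroup M] [Module K M] (L : Polynomial K →ₗ[K] M) (hx : Set.InjOn x s)
    (hL : L (nodal s x) = 0) {p : Polynomial K} (hp : p.natDegree ≤ s.card) :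
    L p = ∑ i ∈ s, p.eval (x i) • L (Lagrange.basis s x i) := by
  set q := p - p.coeff s.card • nodal s x with hq
  have eval_q : ∀ i ∈ s, q.eval (x i) = p.eval (x i) := fun i hi => by
    simp [hq, eval_nodal_at_node hi]
  have degree_q : q.degree < s.card := by
    rw [Polynomial.degree_lt_iff_coeff_zero]
    intro m hm
    rcases hm.eq_or_lt with rfl | hlt
    · have hlead : (nodal s x).coeff s.card = 1 := by
        simpa [natDegree_nodal] using (nodal_monic (s := s) (v := x)).coeff_natDegree
      simp [hq, hlead]
    · simp [hq, Polynomial.coeff_eq_zero_of_natDegree_lt (hp.trans_lt hlt),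
        Polynomial.coeff_eq_zero_of_natDegree_lt ((natDegree_nodal (s := s) (v := x)).trans_lt hlt)]
  calc L p = L q := by simp [hq, hL]
    _ = ∑ i ∈ s, q.eval (x i) • L (Lagrange.basis s x i) := by
      conv_lhs => rw [eq_interpolate hx degree_q, interpolate_apply, map_sum]
      refine Finset.sum_congr rfl fun i _ => ?_
      rw [← Polynomial.smul_eq_C_mul, map_smul]
    _ = ∑ i ∈ s, p.eval (x i) • L (Lagrange.basis s x i) :=
      Finset.sum_congr rfl fun i hi => by rw [eval_q i hi]

/-- The functional `L` apolar to `P`, regarded as a binary form of degree `n`. On polynomials of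
degree at most `n` it is determined by `L ((X + u)ⁿ) = P(u)`, so quadrature rules for `L` are
decompositions of `P` into `n`-th powers. -/
def apolarFunctional (n : ℕ) (P : Polynomial K) : Polynomial K →ₗ[K] K :=
  ∑ ij ∈ Finset.HasAntidiagonal.antidiagonal n,
    (P.coeff ij.1 / n.choose ij.1) • Polynomial.lcoeff K ij.2

lemma apolarFunctional_X_add_C_pow [CharZero K] {n : ℕ} {P : Polynomial K} (hP : P.natDegree ≤ n)
    (u : K) : apolarFunctional n P ((Polynomial.X + Polynomial.C u) ^ n) = P.eval u := by
  rw [Polynomial.eval_eq_sum_range' (Nat.lt_succ_of_le hP),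
    ← Finset.Nat.sum_antidiagonal_eq_sum_range_succ_mk (f := fun ij => P.coeff ij.1 * u ^ ij.1)]
  simp only [apolarFunctional, LinearMap.sum_apply, LinearMap.smul_apply, Polynomial.lcoeff_apply,
    smul_eq_mul, Polynomial.coeff_X_add_C_pow]
  refine Finset.sum_congr rfl fun ij hij => ?_
  obtain rfl := Finset.HasAntidiagonal.mem_antidiagonal.1 hij
  have hchoose : ((ij.1 + ij.2).choose ij.1 : K) ≠ 0 :=
    Nat.cast_ne_zero.2 (Nat.choose_pos (Nat.le_add_right ..)).ne'
  rw [Nat.add_sub_cancel, ← Nat.choose_symm_add]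
  field_simp

theorem exists_eq_sum_pow_of_apolarFunctional_nodal_eq_zero [CharZero K]
    (hx : Set.InjOn x s) {P : Polynomial K} (hP : P.natDegree ≤ s.card)
    (hL : apolarFunctional s.card P (nodal s x) = 0) :
    ∃ c : ι → K, P = ∑ i ∈ s,
      Polynomial.C (c i) * (Polynomial.X + Polynomial.C (x i)) ^ s.card := by
  classical
  refine ⟨fun i => apolarFunctional s.card P (Lagrange.basis s x i), Polynomial.funext fun u => ?_⟩
  rw [← apolarFunctional_X_add_C_pow hP,
    apply_eq_sum_basis_of_apply_nodal_eq_zero _ hx hL (by simp [Polynomial.natDegree_pow])]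
  simp [Polynomial.eval_finsetSum, add_comm, mul_comm]

end Quadrature

section PerturbedNodes

open Lagrange

lemma continuous_apply_nodal {R M ι : Type*} [CommRing R] [TopologicalSpace R]
    [AddCommGroup M] [Module R M] [TopologicalSpace M] [IsTopologicalAddGroup M]
    [ContinuousSMul R M] (s : Finset ι) (L : Polynomial R →ₗ[R] M) :
    Continuous fun x : ι → R => L (nodal s x) := by
  classical
  induction s using Finset.induction_on generalizing L with
  | empty => simpa using continuous_const
  | insert i s hi ih =>
    have hstep (x : ι → R) : L (nodal (insert i s) x) =
        (L ∘ₗ LinearMap.mulLeft R Polynomial.X) (nodal s x) - x i • L (nodal s x) := by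
      rw [nodal_insert_eq_nodal hi, sub_mul, map_sub, ← Polynomial.smul_eq_C_mul, map_smul]
      rfl
    simp only [hstep]
    exact (ih _).sub ((continuous_apply i).smul (ih L))

theorem exists_injective_apply_nodal_eq_zero {n : ℕ} (L : Polynomial ℝ →ₗ[ℝ] ℝ) {a b : ℝ}
    (ha : L ((Polynomial.X + Polynomial.C a) ^ n) < 0)
    (hb : 0 < L ((Polynomial.X + Polynomial.C b) ^ n)) :
    ∃ x : Fin n → ℝ, Function.Injective x ∧ L (nodal Finset.univ x) = 0 := by
  -- The nodes coalesce at `-u` as `ε → 0`, turning the nodal polynomial into `(X + u) ^ n`.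
  let nodes (ε u : ℝ) (j : Fin n) : ℝ := ε * j - u
  let F (ε u : ℝ) : ℝ := L (nodal Finset.univ (nodes ε u))
  have hF : Continuous F.uncurry :=
    (continuous_apply_nodal Finset.univ L).comp (by unfold nodes; fun_prop)
  have hF0 (u : ℝ) : F 0 u = L ((Polynomial.X + Polynomial.C u) ^ n) := by
    simp [F, nodes, nodal_eq]
  have neg : ∀ᶠ ε in nhds 0, F ε a < 0 :=
    (hF.uncurry_right a).continuousAt.eventually_lt_const (by simpa only [hF0] using ha)
  have pos : ∀ᶠ ε in nhds 0, 0 < F ε b :=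
    (hF.uncurry_right b).continuousAt.eventually_const_lt (by simpa only [hF0] using hb)
  obtain ⟨ε, ⟨hneg, hpos⟩, hε⟩ :=
    (((neg.and pos).filter_mono nhdsWithin_le_nhds).and
      (self_mem_nhdsWithin (s := {(0 : ℝ)}ᶜ))).exists
  obtain ⟨u, hu⟩ := mem_range_of_exists_le_of_exists_ge (hF.uncurry_left ε)
    ⟨a, hneg.le⟩ ⟨b, hpos.le⟩
  refine ⟨nodes ε u, fun i j hij => ?_, hu⟩
  simpa [nodes, Fin.ext_iff, show ε ≠ 0 from hε] using hij

end PerturbedNodes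

section UpperBound

variable {d : ℕ}

lemma homogenize_linear (a b : ℝ) :
    (Polynomial.C a * Polynomial.X + Polynomial.C b).homogenize 1 = lin a b :=
  Polynomial.homogenize_eq_of_isHomogeneous (isHomogeneous_lin a b) (by simp [lin])

theorem hasDecomp_homogenize {P : Polynomial ℝ} (hP : P.natDegree ≤ d) {s t : ℝ}
    (hs : P.eval s < 0) (ht : 0 < P.eval t) : HasDecomp (P.homogenize d) d d := by
  obtain ⟨τ, hτ, hnodal⟩ := exists_injective_apply_nodal_eq_zero (n := d) (apolarFunctional d P)
    (by rwa [apolarFunctional_X_add_C_pow hP]) (by rwa [apolarFunctional_X_add_C_pow hP])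
  obtain ⟨c, hc⟩ := exists_eq_sum_pow_of_apolarFunctional_nodal_eq_zero (s := Finset.univ)
    hτ.injOn (P := P) (by simpa) (by simpa)
  refine ⟨c, fun _ => 1, τ, by simp, ?_⟩
  refine Polynomial.homogenize_eq_of_isHomogeneous
    (IsHomogeneous.sum _ _ _ fun j _ => isHomogeneous_C_mul_lin_pow ..) ?_
  rw [hc]
  simp [lin]

lemma exists_eval_neg_and_eval_pos_of_simple_root {P : Polynomial ℝ} {σ : ℝ} (hσ : P.IsRoot σ)
    (hσ' : P.derivative.eval σ ≠ 0) : (∃ s, P.eval s < 0) ∧ ∃ t, 0 < P.eval t := by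
  rw [← Polynomial.deriv] at hσ'
  constructor <;> by_contra! h
  · exact hσ' (IsLocalMin.deriv_eq_zero (.of_forall fun s => hσ.le.trans (h s)))
  · exact hσ' (IsLocalMax.deriv_eq_zero (.of_forall fun t => (h t).trans hσ.ge))

lemma exists_simple_root_prod_linear {K ι : Type*} [Field K] [Fintype ι] [Nontrivial ι]
    {a b : ι → K} (hab : ∀ i j, i ≠ j → a i * b j ≠ a j * b i) :
    ∃ σ, (∏ j, (Polynomial.C (a j) * Polynomial.X + Polynomial.C (b j))).IsRoot σ ∧
      (∏ j, (Polynomial.C (a j) * Polynomial.X + Polynomial.C (b j))).derivative.eval σ ≠ 0 := by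
  classical
  obtain ⟨i, hi⟩ : ∃ i, a i ≠ 0 := by
    by_contra! h
    obtain ⟨i, j, hij⟩ := exists_pair_ne ι
    exact hab i j hij (by simp [h])
  have hroot : a i * (-b i / a i) + b i = 0 := by field_simp; ring
  have hcofactor : ∏ j ∈ Finset.univ.erase i, (a j * (-b i / a i) + b j) ≠ 0 := by
    refine Finset.prod_ne_zero_iff.2 fun j hj h0 => hab i j (Finset.ne_of_mem_erase hj).symm ?_
    field_simp at h0
    linear_combination h0
  refine ⟨-b i / a i, ?_⟩
  rw [← Finset.mul_prod_erase Finset.univ _ (Finset.mem_univ i)]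
  constructor
  · simp [hroot]
  · simpa [Polynomial.derivative_mul, Polynomial.eval_prod, hroot] using ⟨hi, hcofactor⟩

theorem SplitsDistinct.hasDecomp {f : MvPolynomial (Fin 2) ℝ} (hf : SplitsDistinct f d)
    (hd : 1 ≤ d) : HasDecomp f d d := by
  obtain ⟨a, b, hne, hab, rfl⟩ := hf
  rcases hd.eq_or_lt with rfl | hd
  · exact ⟨1, a, b, hne, by simp⟩
  have : Nontrivial (Fin d) := Fin.nontrivial_iff_two_le.2 hd
  obtain ⟨σ, hσ, hσ'⟩ := exists_simple_root_prod_linear hab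
  obtain ⟨⟨s, hs⟩, ⟨t, ht⟩⟩ := exists_eval_neg_and_eval_pos_of_simple_root hσ hσ'
  have hdeg (j : Fin d) :
      (Polynomial.C (a j) * Polynomial.X + Polynomial.C (b j)).natDegree ≤ 1 :=
    Polynomial.natDegree_linear_le
  have hhom := Polynomial.homogenize_finsetProd (s := Finset.univ) fun j _ => hdeg j
  simp only [homogenize_linear, Finset.sum_const, Finset.card_univ, Fintype.card_fin, smul_eq_mul,
    mul_one] at hhom
  rw [← hhom]
  refine hasDecomp_homogenize ?_ hs ht
  exact (Polynomial.natDegree_prod_le _ _).trans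
    ((Finset.sum_le_sum fun j _ => hdeg j).trans (by simp))

end UpperBound

/-- a real binary form of degree `d ≥ 1` which is a product of `d`
pairwise non-proportional real linear forms has real rank exactly `d`. -/
theorem stmt4 (d : ℕ) (hd : 1 ≤ d) (f : MvPolynomial (Fin 2) ℝ)
    (hsplit : SplitsDistinct f d) :
    realRank f d = d := by
  have h : IsLeast {r | HasDecomp f d r} d :=
    ⟨hsplit.hasDecomp hd, fun _ hr => hsplit.le_of_hasDecomp hr⟩
  exact h.csInf_eq
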